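/- Assume (H0), fix h > 0, and let G_k = G_{k,h} be the Grünwald coefficients (with G_k = 0 for k < 0). Let φ_h(β) = e^{hβ} ψ((1−e^{−hβ})/h) = Σ_{k=0}^∞ G_k e^{h(1−k)β} for β ≥ 0; φ_h is strictly increasing on [0,∞) with φ_h(0)=0, and admits an inverse φ_h^{−1} on its range. For β > 0 in the range of φ_h, define the doubly infinite vector y = (y_n)_{n∈ℤ} by y_n = e^{h(n−1)φ_h^{−1}(β)} for n ≤ 0 and y_n = (1/β) Σ_{k=n}^∞ G_{k+1} e^{h(n−1−k)φ_h^{−1}(β)} for n > 0. Then for every n ∈ ℤ: β·y_n − Σ_{k=−∞}^{0} G_{n−k+1} · y_k = G_0 if n = 0, and = 0 otherwise (all series converging absolutely). Equivalently, (βI − G_stop^T) y = G_0 e_0, where G_stop = (g_{i,j})_{i,j∈ℤ} with g_{i,j} = G_{j−i+1} for i ≤ 0 and g_{i,j} = 0 for i > 0, and e_0 is the coordinate vector at 0. -/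

import Mathlib

open MeasureTheory Set Filter Topology

noncomputable section

/-- Assumption (H0): `μ` is a nonnegative Borel measure on `(0,∞)` with
`∫ (y² ∧ y) μ(dy) < ∞` and `∫_{(0,1)} y μ(dy) = ∞`. -/
def H0 (μ : Measure ℝ) : Prop :=
  μ (Iic 0) = 0 ∧
  (∫⁻ y, ENNReal.ofReal (min (y ^ 2) y) ∂μ) < ⊤ ∧
  (∫⁻ y in Ioo (0:ℝ) 1, ENNReal.ofReal y ∂μ) = ⊤

/-- The Laplace exponent `ψ(ξ) = ∫ (e^{−ξy} − 1 + ξy) μ(dy)`. -/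
noncomputable def psiH (μ : Measure ℝ) (ξ : ℝ) : ℝ :=
  ∫ y, (Real.exp (-(ξ * y)) - 1 + ξ * y) ∂μ

/-- `φ_h(β) = e^{hβ} ψ((1−e^{−hβ})/h) = Σ_{k≥0} G_k e^{h(1−k)β}`. -/
noncomputable def phiExp (G : ℤ → ℝ) (h β : ℝ) : ℝ :=
  ∑' k : ℕ, G (k : ℤ) * Real.exp (h * (1 - (k : ℝ)) * β)

/-- The candidate resolvent vector `y = y(β)` (with `θ = φ_h^{−1}(β)`):
`y_n = e^{h(n−1)θ}` for `n ≤ 0` and `y_n = (1/β) Σ_{k≥n} G_{k+1} e^{h(n−1−k)θ}` for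
`n > 0`. -/
noncomputable def resVec (G : ℤ → ℝ) (h θ β : ℝ) : ℤ → ℝ :=
  fun n => if n ≤ 0 then Real.exp (h * ((n : ℝ) - 1) * θ)
    else (1 / β) * ∑' m : ℕ, G (n + (m : ℤ) + 1) * Real.exp (h * (-1 - (m : ℝ)) * θ)

lemma aux_mono {a b : ℝ} (ha : 0 ≤ a) (hab : a ≤ b) :
    Real.exp (-a) - 1 + a ≤ Real.exp (-b) - 1 + b := by
  have h1 : Real.exp (-b) = Real.exp (-a) * Real.exp (-(b - a)) := by
    rw [← Real.exp_add]; ring_nf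
  have h2 := Real.add_one_le_exp (-(b - a))
  have h3 : Real.exp (-a) ≤ 1 := by simpa using ha
  have h4 := Real.exp_pos (-a)
  rw [h1]
  nlinarith [mul_le_mul_of_nonneg_left h2 h4.le, mul_nonneg (sub_nonneg.2 h3) (sub_nonneg.2 hab)]

lemma aux_nonneg (x : ℝ) : 0 ≤ Real.exp (-x) - 1 + x := by
  have := Real.add_one_le_exp (-x)
  linarith

lemma aux_bound {ξ y : ℝ} (hξ : 0 ≤ ξ) (hy : 0 ≤ y) :
    Real.exp (-(ξ * y)) - 1 + ξ * y ≤ (ξ + ξ ^ 2) * min (y ^ 2) y := by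
  have hx : 0 ≤ ξ * y := mul_nonneg hξ hy
  have h1 : Real.exp (-(ξ * y)) ≤ 1 := by simpa using hx
  have h2 : Real.exp (-(ξ * y)) ≤ 1 - ξ * y + (ξ * y) ^ 2 := by
    have h3 := Real.add_one_le_exp (ξ * y)
    have h4 : Real.exp (-(ξ * y)) * Real.exp (ξ * y) = 1 := by
      rw [← Real.exp_add]; simp
    have h5 := Real.exp_pos (-(ξ * y))
    have h6 : Real.exp (-(ξ * y)) * (ξ * y + 1) ≤ 1 := by
      exact (mul_le_mul_of_nonneg_left h3 h5.le).trans_eq h4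
    have h7 : (1 - ξ * y + (ξ * y) ^ 2) * (ξ * y + 1) = 1 + (ξ * y) ^ 3 := by ring
    have h8 : 0 ≤ (ξ * y) ^ 3 := by positivity
    have h9 : 0 < ξ * y + 1 := by linarith
    by_contra hc
    push Not at hc
    nlinarith [mul_lt_mul_of_pos_right hc h9]
  rcases min_choice (y ^ 2) y with h | h <;> rw [h]
  · nlinarith [mul_nonneg hξ (sq_nonneg y)]
  · nlinarith [mul_nonneg (sq_nonneg ξ) hy]

lemma ae_pos {μ : Measure ℝ} (h0 : H0 μ) : ∀ᵐ y ∂μ, 0 < y := by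
  rw [ae_iff]
  have : {a : ℝ | ¬ 0 < a} = Iic 0 := by ext; simp
  rw [this]; exact h0.1

lemma int_min {μ : Measure ℝ} (h0 : H0 μ) : Integrable (fun y : ℝ => min (y ^ 2) y) μ := by
  refine ⟨(by fun_prop : Measurable fun y : ℝ => min (y ^ 2) y).aestronglyMeasurable, ?_⟩
  rw [hasFiniteIntegral_iff_ofReal]
  · exact h0.2.1
  · filter_upwards [ae_pos h0] with y hy
    exact le_min (sq_nonneg y) hy.le

lemma int_f {μ : Measure ℝ} (h0 : H0 μ) {ξ : ℝ} (hξ : 0 ≤ ξ) :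
    Integrable (fun y : ℝ => Real.exp (-(ξ * y)) - 1 + ξ * y) μ := by
  refine ((int_min h0).const_mul (ξ + ξ ^ 2)).mono'
    (by fun_prop : Measurable fun y : ℝ => Real.exp (-(ξ * y)) - 1 + ξ * y).aestronglyMeasurable ?_
  filter_upwards [ae_pos h0] with y hy
  rw [Real.norm_of_nonneg (aux_nonneg _)]
  exact aux_bound hξ hy.le

lemma psi_nonneg (μ : Measure ℝ) (ξ : ℝ) : 0 ≤ psiH μ ξ :=
  integral_nonneg fun _ => aux_nonneg _

lemma psi_mono {μ : Measure ℝ} (h0 : H0 μ) {a b : ℝ} (ha : 0 ≤ a) (hab : a ≤ b) :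
    psiH μ a ≤ psiH μ b := by
  refine integral_mono_ae (int_f h0 ha) (int_f h0 (ha.trans hab)) ?_
  filter_upwards [ae_pos h0] with y hy
  exact aux_mono (mul_nonneg ha hy.le) (mul_le_mul_of_nonneg_right hab hy.le)

lemma psi_le {μ : Measure ℝ} (h0 : H0 μ) {a : ℝ} (ha : 0 ≤ a) :
    psiH μ a ≤ (a + a ^ 2) * ∫ y, min (y ^ 2) y ∂μ := by
  rw [← integral_const_mul]
  refine integral_mono_ae (int_f h0 ha) ((int_min h0).const_mul _) ?_
  filter_upwards [ae_pos h0] with y hy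
  exact aux_bound ha hy.le

lemma psi_pos {μ : Measure ℝ} (h0 : H0 μ) {a : ℝ} (ha : 0 < a) : 0 < psiH μ a := by
  unfold psiH
  rw [integral_pos_iff_support_of_nonneg (fun y => aux_nonneg _) (int_f h0 ha.le)]
  rw [pos_iff_ne_zero]
  intro hz
  have hsub : Ioi (0:ℝ) ⊆ Function.support (fun y : ℝ => Real.exp (-(a * y)) - 1 + a * y) := by
    intro y hy
    have hy' : 0 < a * y := mul_pos ha hy
    have := Real.add_one_lt_exp (x := -(a * y)) (by linarith [hy'] : -(a * y) < 0).ne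
    simp only [Function.mem_support]
    apply ne_of_gt
    linarith
  have hz' := measure_mono_null hsub hz
  have : (∫⁻ y in Ioo (0:ℝ) 1, ENNReal.ofReal y ∂μ) = 0 :=
    setLIntegral_measure_zero _ _ (measure_mono_null Ioo_subset_Ioi_self hz')
  rw [h0.2.2] at this
  simp at this

/-- Lemma 3.23 / `resy*`. Under (H0) and for `h > 0`, with the
Grünwald coefficients `G_k = G_{k,h}` (`G_k = 0` for `k < 0`), the function
`φ_h(β) = Σ_k G_k e^{h(1−k)β}` is strictly increasing on `[0,∞)` with `φ_h(0) = 0`, and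
for every `β > 0` in its range (say `β = φ_h(θ)`, `θ ≥ 0`) the vector `y` defined above
satisfies (with all series converging absolutely)
`β y_n − Σ_{k ≤ 0} G_{n−k+1} y_k = G_0·1{n=0}`, i.e. `(βI − G_stopᵀ) y = G_0 e_0`. -/
theorem resolvent_vector_identity (μ : Measure ℝ) (h0 : H0 μ) (h : ℝ) (hh : 0 < h)
    (G : ℤ → ℝ) (hGneg : ∀ k : ℤ, k < 0 → G k = 0)
    (hG : ∀ ξ : ℝ, |ξ| < 1 →
      HasSum (fun j : ℕ => G (j : ℤ) * ξ ^ j) (psiH μ ((1 - ξ) / h))) :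
    StrictMonoOn (phiExp G h) (Ici 0) ∧ phiExp G h 0 = 0 ∧
    (∀ β θ : ℝ, 0 < β → 0 ≤ θ → phiExp G h θ = β →
      (∀ n : ℤ, 0 < n →
        Summable (fun m : ℕ => G (n + (m : ℤ) + 1) * Real.exp (h * (-1 - (m : ℝ)) * θ))) ∧
      (∀ n : ℤ,
        HasSum (fun m : ℕ => G (n + (m : ℤ) + 1) * resVec G h θ β (-(m : ℤ)))
          (β * resVec G h θ β n - (if n = 0 then G 0 else 0)))) := by
  have hphi : ∀ θ : ℝ, 0 < θ →
      phiExp G h θ = Real.exp (h * θ) * psiH μ ((1 - Real.exp (-(h * θ))) / h) := by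
    intro θ hθ
    have hx : |Real.exp (-(h * θ))| < 1 := by
      rw [abs_of_pos (Real.exp_pos _)]
      simpa using mul_pos hh hθ
    rw [← ((hG _ hx).mul_left (Real.exp (h * θ))).tsum_eq]
    unfold phiExp
    congr 1
    ext k
    rw [← Real.exp_nat_mul, mul_left_comm, ← Real.exp_add]
    ring_nf
  have hphi0 : phiExp G h 0 = 0 := by
    unfold phiExp
    simp only [mul_zero, Real.exp_zero, mul_one]
    by_cases hs : Summable (fun k : ℕ => G (k : ℤ))
    · have h1 := Real.tendsto_tsum_powerSeries_nhdsWithin_lt hs.hasSum.tendsto_sum_nat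
      have h2 : Tendsto (fun x : ℝ => ((1 - x) / h + ((1 - x) / h) ^ 2) *
          ∫ y, min (y ^ 2) y ∂μ) (𝓝[<] 1) (𝓝 0) := by
        have : Continuous (fun x : ℝ => ((1 - x) / h + ((1 - x) / h) ^ 2) *
          ∫ y, min (y ^ 2) y ∂μ) := by fun_prop
        have h3 := (this.tendsto 1).mono_left (nhdsWithin_le_nhds (s := Iio 1))
        simpa using h3
      have hev : ∀ᶠ x : ℝ in 𝓝[<] 1, 0 < x ∧ x < 1 :=
        Ioo_mem_nhdsLT (by norm_num)
      refine tendsto_nhds_unique h1 (squeeze_zero' ?_ ?_ h2)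
      · filter_upwards [hev] with x hx
        rw [(hG x (by rw [abs_of_pos hx.1]; exact hx.2)).tsum_eq]
        exact psi_nonneg _ _
      · filter_upwards [hev] with x hx
        rw [(hG x (by rw [abs_of_pos hx.1]; exact hx.2)).tsum_eq]
        exact psi_le h0 (div_nonneg (by linarith [hx.2]) hh.le)
    · exact tsum_eq_zero_of_not_summable hs
  have harg : ∀ θ : ℝ, 0 < θ → 0 < (1 - Real.exp (-(h * θ))) / h := by
    intro θ hθ
    refine div_pos ?_ hh
    have : Real.exp (-(h * θ)) < 1 := by simpa using mul_pos hh hθ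
    linarith
  refine ⟨?_, hphi0, ?_⟩
  · intro a ha b hb hab
    have hb0 : 0 < b := lt_of_le_of_lt ha hab
    rcases (show (0:ℝ) ≤ a from ha).eq_or_lt with rfl | ha0
    · rw [hphi0, hphi b hb0]
      exact mul_pos (Real.exp_pos _) (psi_pos h0 (harg b hb0))
    · rw [hphi a ha0, hphi b hb0]
      refine mul_lt_mul (Real.exp_lt_exp.2 (mul_lt_mul_of_pos_left hab hh))
        (psi_mono h0 (harg a ha0).le ?_) (psi_pos h0 (harg a ha0)) (Real.exp_pos _).le
      gcongr
  · intro β θ hβ hθ hφ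
    have hθ0 : 0 < θ := by
      rcases hθ.eq_or_lt with rfl | h'
      · rw [hphi0] at hφ; exact absurd hφ hβ.ne
      · exact h'
    rw [hphi θ hθ0] at hφ
    have hx : |Real.exp (-(h * θ))| < 1 := by
      rw [abs_of_pos (Real.exp_pos _)]
      simpa using mul_pos hh hθ0
    have hS := hG _ hx
    set P := psiH μ ((1 - Real.exp (-(h * θ))) / h) with hP
    have hx0 := Real.exp_pos (-(h * θ))
    have hpow : ∀ m : ℕ, Real.exp (h * (-1 - (m : ℝ)) * θ) = Real.exp (-(h * θ)) ^ (m + 1) := by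
      intro m
      rw [← Real.exp_nat_mul]; push_cast; ring_nf
    have hβP : β * Real.exp (-(h * θ)) = P := by
      rw [← hφ, mul_right_comm, ← Real.exp_add]; simp
    have hsum : ∀ n : ℤ, 0 < n →
        Summable (fun m : ℕ => G (n + (m : ℤ) + 1) * Real.exp (h * (-1 - (m : ℝ)) * θ)) := by
      intro n hn
      lift n to ℕ using hn.le
      have h1 := (((summable_nat_add_iff (n + 1)).2 hS.summable).mul_right
        ((Real.exp (-(h * θ)) ^ n)⁻¹))
      refine h1.congr fun m => ?_
      rw [hpow, mul_assoc]
      congr 1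
      · congr 1; push_cast; ring
      · rw [show m + (n + 1) = (m + 1) + n by ring, pow_add _ (m + 1) n]
        field_simp
    refine ⟨hsum, fun n => ?_⟩
    have hres : ∀ m : ℕ, resVec G h θ β (-(m : ℤ)) = Real.exp (h * (-1 - (m : ℝ)) * θ) := by
      intro m
      unfold resVec
      rw [if_pos (by omega)]
      push_cast; ring_nf
    simp only [hres]
    rcases lt_trichotomy n 0 with hn | rfl | hn
    · obtain ⟨p, rfl⟩ : ∃ p : ℕ, n = -((p : ℤ) + 1) := ⟨(-n - 1).toNat, by omega⟩
      have hr : resVec G h θ β (-((p : ℤ) + 1)) = Real.exp (-(h * θ)) ^ (p + 2) := by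
        have := hres (p + 1)
        rw [hpow] at this
        rw [← this]; push_cast; rfl
      rw [if_neg hn.ne, sub_zero, hr]
      rw [← hasSum_nat_add_iff' p]
      have hz : ∑ i ∈ Finset.range p, G (-((p : ℤ) + 1) + (i : ℤ) + 1) *
          Real.exp (h * (-1 - (i : ℝ)) * θ) = 0 := by
        refine Finset.sum_eq_zero fun i hi => ?_
        rw [hGneg _ (by have := Finset.mem_range.1 hi; omega), zero_mul]
      rw [hz, sub_zero, pow_succ', ← mul_assoc, hβP, mul_comm]
      refine Eq.mp (congrArg (fun f => HasSum f _) ?_) (hS.mul_left (Real.exp (-(h * θ)) ^ (p + 1)))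
      funext m
      symm
      rw [hpow, mul_left_comm, ← pow_add]
      congr 1
      · congr 1; push_cast; ring
      · congr 1; ring
    · have hr : resVec G h θ β 0 = Real.exp (-(h * θ)) := by
        have := hres 0
        rw [hpow] at this
        simpa using this
      rw [if_pos rfl, hr, hβP]
      have h1 := (hasSum_nat_add_iff' 1).2 hS
      simp only [Finset.sum_range_one, pow_zero, mul_one, Nat.cast_zero] at h1
      refine Eq.mp (congrArg (fun f => HasSum f _) ?_) h1
      funext m
      symm
      rw [hpow]
      congr 2; push_cast; ring
    · rw [if_neg hn.ne', sub_zero]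
      have hr : β * resVec G h θ β n =
          ∑' m : ℕ, G (n + (m : ℤ) + 1) * Real.exp (h * (-1 - (m : ℝ)) * θ) := by
        unfold resVec
        rw [if_neg (by omega), ← mul_assoc, mul_one_div_cancel hβ.ne', one_mul]
      rw [hr]
      exact (hsum n hn).hasSum
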